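/- Let Ω be a left artinian ring and let s be the number of isomorphism classes of simple left Ω-modules. Then both K₀(Ω) and G₀(Ω) are free ℤ-modules of rank s. -/

import Mathlib

/-! ### Grothendieck groups `G₀` and `K₀` of a ring

`G0 S` is the Grothendieck group of the category of finitely generated (left) `S`-modules:
the free abelian group on (bundled) finitely generated `S`-modules modulo the relation
`[B] = [A] + [C]` for every short exact sequence `0 → A → B → C → 0`.

`K0 S` is the Grothendieck group of the category of finitely generated projective (left)
`S`-modules: the free abelian group on bundled finitely generated projective `S`-modules
modulo the relations `[B] = [A] + [C]` whenever `B ≅ A ⊕ C`. -/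

/-- A bundled finitely generated (left) module over the ring `S`. -/
structure FGMod (S : Type) [Ring S] : Type 1 where
  carrier : Type
  [isAddCommGroup : AddCommGroup carrier]
  [isModule : Module S carrier]
  [isFinite : Module.Finite S carrier]

attribute [instance] FGMod.isAddCommGroup FGMod.isModule FGMod.isFinite

/-- A bundled finitely generated projective (left) module over the ring `S`. -/
structure PMod (S : Type) [Ring S] : Type 1 where
  carrier : Type
  [isAddCommGroup : AddCommGroup carrier]
  [isModule : Module S carrier]
  [isFinite : Module.Finite S carrier]
  [isProjective : Module.Projective S carrier]

attribute [instance] PMod.isAddCommGroup PMod.isModule PMod.isFinite PMod.isProjective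

/-- The Grothendieck group of the category of finitely generated `S`-modules. -/
def G0 (S : Type) [Ring S] : Type 1 :=
  FreeAbelianGroup (FGMod S) ⧸ AddSubgroup.closure
    {x | ∃ (A B C : FGMod S) (f : A.carrier →ₗ[S] B.carrier) (g : B.carrier →ₗ[S] C.carrier),
      Function.Injective f ∧ Function.Surjective g ∧ Function.Exact f g ∧
      x = FreeAbelianGroup.of B - FreeAbelianGroup.of A - FreeAbelianGroup.of C}

noncomputable instance (S : Type) [Ring S] : AddCommGroup (G0 S) :=
  QuotientAddGroup.Quotient.addCommGroup _

/-- The class `[M]` of a finitely generated `S`-module `M` in `G0 S`. -/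
def G0.cls (S : Type) [Ring S] (M : Type) [AddCommGroup M] [Module S M]
    [Module.Finite S M] : G0 S :=
  QuotientAddGroup.mk (FreeAbelianGroup.of (FGMod.mk M))

/-- The Grothendieck group of the category of finitely generated projective `S`-modules. -/
def K0 (S : Type) [Ring S] : Type 1 :=
  FreeAbelianGroup (PMod S) ⧸ AddSubgroup.closure
    {x | ∃ A B C : PMod S, Nonempty (B.carrier ≃ₗ[S] A.carrier × C.carrier) ∧
      x = FreeAbelianGroup.of B - FreeAbelianGroup.of A - FreeAbelianGroup.of C}

noncomputable instance (S : Type) [Ring S] : AddCommGroup (K0 S) :=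
  QuotientAddGroup.Quotient.addCommGroup _

/-- The class `[P]` of a finitely generated projective `S`-module `P` in `K0 S`. -/
def K0.cls (S : Type) [Ring S] (P : Type) [AddCommGroup P] [Module S P]
    [Module.Finite S P] [Module.Projective S P] : K0 S :=
  QuotientAddGroup.mk (FreeAbelianGroup.of (PMod.mk P))

/-- `c : K0 S → G0 S` is the Cartan homomorphism iff it sends the `K₀`-class of every
finitely generated projective module to its `G₀`-class. (Such a homomorphism exists and is
unique, since `K0 S` is generated by the classes of finitely generated projective modules.) -/
def IsCartanMap (S : Type) [Ring S] (c : K0 S →+ G0 S) : Prop :=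
  ∀ (P : Type) [AddCommGroup P] [Module S P] [Module.Finite S P] [Module.Projective S P],
    c (K0.cls S P) = G0.cls S P

/-! ### Statement: for a left artinian ring `Ω`, both `K₀(Ω)` and `G₀(Ω)` are free
`ℤ`-modules of rank `s`, where `s` is the number of isomorphism classes of simple left
`Ω`-modules.  Being a free `ℤ`-module of rank `s` is expressed as the existence of an
additive isomorphism with `SimpleClasses Ω →₀ ℤ`, the free abelian group on the set of
isomorphism classes of simple left `Ω`-modules. -/

/-- A bundled simple left `Ω`-module. -/
structure SimpleMod (S : Type) [Ring S] : Type 1 where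
  carrier : Type
  [isAddCommGroup : AddCommGroup carrier]
  [isModule : Module S carrier]
  [isSimple : IsSimpleModule S carrier]

attribute [instance] SimpleMod.isAddCommGroup SimpleMod.isModule SimpleMod.isSimple

/-- The setoid identifying linearly isomorphic simple modules. -/
def SimpleMod.isoSetoid (S : Type) [Ring S] : Setoid (SimpleMod S) where
  r M N := Nonempty (M.carrier ≃ₗ[S] N.carrier)
  iseqv := ⟨fun _ => ⟨LinearEquiv.refl _ _⟩, fun ⟨e⟩ => ⟨e.symm⟩,
    fun ⟨e⟩ ⟨e'⟩ => ⟨e.trans e'⟩⟩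

/-- The type of isomorphism classes of simple left `S`-modules. -/
def SimpleClasses (S : Type) [Ring S] : Type 1 :=
  Quotient (SimpleMod.isoSetoid S)

/-! ### Projective covers of simple modules -/

section Helpers

variable {Ω : Type} [Ring Ω]

/-- `p` is surjective and every proper submodule lies in its kernel. -/
def IsCover {P S : Type} [AddCommGroup P] [Module Ω P] [AddCommGroup S] [Module Ω S]
    (p : P →ₗ[Ω] S) : Prop :=
  Function.Surjective p ∧ ∀ N : Submodule Ω P, N ≠ ⊤ → N ≤ LinearMap.ker p

theorem projective_of_isCompl {P : Type} [AddCommGroup P] [Module Ω P] [Module.Projective Ω P]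
    {N R : Submodule Ω P} (h : IsCompl N R) : Module.Projective Ω R :=
  Module.Projective.of_split R.subtype (Submodule.projectionOnto R N h.symm) (by
    ext x
    simp)

theorem toNat_lt_of_lt {a b : ℕ∞} (h : a < b) (hb : b ≠ ⊤) : a.toNat < b.toNat := by
  lift b to ℕ using hb
  lift a to ℕ using h.ne_top
  simpa using h

theorem exists_cover [IsArtinianRing Ω] (S : Type) [AddCommGroup S] [Module Ω S]
    [IsSimpleModule Ω S] :
    ∃ (P : PMod Ω) (p : P.carrier →ₗ[Ω] S), IsCover p := by
  classical
  have hne : ∃ n : ℕ, ∃ (P : PMod Ω) (p : P.carrier →ₗ[Ω] S), Function.Surjective p ∧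
      (Module.length Ω P.carrier).toNat = n := by
    have := IsSimpleModule.nontrivial Ω S
    obtain ⟨s, hs⟩ := exists_ne (0 : S)
    exact ⟨_, PMod.mk Ω, LinearMap.toSpanSingleton Ω S s,
      IsSimpleModule.toSpanSingleton_surjective Ω hs, rfl⟩
  obtain ⟨P, p, hp, hn⟩ := Nat.find_spec hne
  refine ⟨P, p, hp, fun N hN => ?_⟩
  by_contra hle
  have h1 : p ∘ₗ N.subtype ≠ 0 := by
    intro h
    apply hle
    intro x hx
    exact LinearMap.congr_fun h ⟨x, hx⟩
  obtain ⟨h, hh⟩ := Module.projective_lifting_property (p ∘ₗ N.subtype) p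
    (LinearMap.surjective_of_ne_zero h1)
  let f : Module.End Ω P.carrier := N.subtype ∘ₗ h
  have hpf : ∀ x, p (f x) = p x := fun x => LinearMap.congr_fun hh x
  obtain ⟨n, hc, hn1⟩ := ((f.eventually_isCompl_ker_pow_range_pow).and
    (Filter.eventually_ge_atTop 1)).exists
  have hpfn : ∀ (m : ℕ) x, p ((f ^ m) x) = p x := by
    intro m
    induction m with
    | zero => intro x; simp
    | succ m ih => intro x; rw [pow_succ, Module.End.mul_apply, ih, hpf]
  have hrange : LinearMap.range (f ^ n) ≠ ⊤ := by
    intro htop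
    apply hN
    rw [eq_top_iff, ← htop]
    rintro _ ⟨x, rfl⟩
    obtain ⟨m, rfl⟩ : ∃ m, n = m + 1 := ⟨n - 1, by omega⟩
    rw [pow_succ', Module.End.mul_apply]
    exact (h _).2
  have hproj := projective_of_isCompl hc
  have hlt := Submodule.length_lt hrange
  have hlt' : (Module.length Ω (LinearMap.range (f ^ n))).toNat < Nat.find hne := by
    rw [← hn]
    exact toNat_lt_of_lt hlt Module.length_ne_top
  refine Nat.find_min hne hlt' ⟨PMod.mk (LinearMap.range (f ^ n)),
    p ∘ₗ (LinearMap.range (f ^ n)).subtype, ?_, rfl⟩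
  intro s
  obtain ⟨x, rfl⟩ := hp s
  exact ⟨⟨(f ^ n) x, x, rfl⟩, hpfn n x⟩

/-- Two simple quotients of a cover agree. -/
theorem IsCover.equiv_of_ne_zero {P S T : Type} [AddCommGroup P] [Module Ω P]
    [AddCommGroup S] [Module Ω S] [IsSimpleModule Ω S]
    [AddCommGroup T] [Module Ω T] [IsSimpleModule Ω T]
    {p : P →ₗ[Ω] S} (hp : IsCover p) {g : P →ₗ[Ω] T} (hg : g ≠ 0) :
    LinearMap.ker g = LinearMap.ker p ∧ Nonempty (S ≃ₗ[Ω] T) := by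
  have hgs := LinearMap.surjective_of_ne_zero hg
  have hle : LinearMap.ker g ≤ LinearMap.ker p := by
    apply hp.2
    intro h
    exact hg (LinearMap.ker_eq_top.1 h)
  have hco : IsCoatom (LinearMap.ker g) := by
    rw [← isSimpleModule_iff_isCoatom]
    exact IsSimpleModule.congr (g.quotKerEquivOfSurjective hgs)
  have hpt : LinearMap.ker p ≠ ⊤ := by
    intro h
    have := IsSimpleModule.nontrivial Ω S
    obtain ⟨s, hs⟩ := exists_ne (0 : S)
    obtain ⟨x, rfl⟩ := hp.1 s
    exact hs (by rw [LinearMap.ker_eq_top.1 h]; rfl)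
  have heq : LinearMap.ker g = LinearMap.ker p :=
    ((hco.le_iff).1 hle).resolve_left hpt |>.symm
  exact ⟨heq, ⟨(p.quotKerEquivOfSurjective hp.1).symm ≪≫ₗ
    Submodule.quotEquivOfEq _ _ heq.symm ≪≫ₗ g.quotKerEquivOfSurjective hgs⟩⟩

/-! ### Multiplicity for `G₀` -/

/-- Post-composition on `Hom(P, -)` as a map of modules over the endomorphisms of `P`. -/
def postMap (P : Type) [AddCommGroup P] [Module Ω P] {A B : Type} [AddCommGroup A] [Module Ω A]
    [AddCommGroup B] [Module Ω B] (f : A →ₗ[Ω] B) :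
    (P →ₗ[Ω] A) →ₗ[(Module.End Ω P)ᵈᵐᵃ] (P →ₗ[Ω] B) where
  toFun h := f ∘ₗ h
  map_add' x y := by ext; simp
  map_smul' x y := by ext; rfl

/-- Length of `Hom(P, M)` over the endomorphism ring of `P`. -/
noncomputable def hlen (P M : Type) [AddCommGroup P] [Module Ω P] [AddCommGroup M] [Module Ω M] :
    ℕ∞ :=
  Module.length (Module.End Ω P)ᵈᵐᵃ (P →ₗ[Ω] M)

theorem hlen_exact (P : Type) [AddCommGroup P] [Module Ω P] [Module.Projective Ω P]
    {A B C : Type} [AddCommGroup A] [Module Ω A]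
    [AddCommGroup B] [Module Ω B] [AddCommGroup C] [Module Ω C]
    (f : A →ₗ[Ω] B) (g : B →ₗ[Ω] C) (hf : Function.Injective f) (hg : Function.Surjective g)
    (h : Function.Exact f g) : hlen (Ω := Ω) P B = hlen (Ω := Ω) P A + hlen (Ω := Ω) P C := by
  refine Module.length_eq_add_of_exact (postMap P f) (postMap P g) ?_ ?_ ?_
  · intro a b hab
    ext x
    exact hf (LinearMap.congr_fun hab x)
  · intro k
    exact Module.projective_lifting_property g k hg
  · intro b
    constructor
    · intro hb
      have hb' : ∀ x, b x ∈ LinearMap.range f := fun x => (h (b x)).1 (LinearMap.congr_fun hb x)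
      let e := LinearEquiv.ofInjective f hf
      refine ⟨e.symm.toLinearMap ∘ₗ b.codRestrict _ hb', ?_⟩
      ext x
      have := e.apply_symm_apply (b.codRestrict _ hb' x)
      exact congrArg Subtype.val this
    · rintro ⟨a, rfl⟩
      ext x
      exact (h _).2 ⟨a x, rfl⟩

theorem hlen_simple_eq_one (P S : Type) [AddCommGroup P] [Module Ω P] [Module.Projective Ω P]
    [AddCommGroup S] [Module Ω S] [IsSimpleModule Ω S] [Nontrivial (P →ₗ[Ω] S)] :
    hlen (Ω := Ω) P S = 1 := by
  have : IsSimpleModule (Module.End Ω P)ᵈᵐᵃ (P →ₗ[Ω] S) := by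
    rw [isSimpleModule_iff_toSpanSingleton_surjective]
    refine ⟨inferInstance, fun f hf g => ?_⟩
    obtain ⟨h, hh⟩ := Module.projective_lifting_property f g (LinearMap.surjective_of_ne_zero hf)
    exact ⟨DomMulAct.mk h, hh⟩
  exact Module.length_eq_one _ _

theorem hlen_simple_ne_top (P S : Type) [AddCommGroup P] [Module Ω P] [Module.Projective Ω P]
    [AddCommGroup S] [Module Ω S] [IsSimpleModule Ω S] :
    hlen (Ω := Ω) P S ≠ ⊤ := by
  rcases subsingleton_or_nontrivial (P →ₗ[Ω] S) with h | h
  · simp [hlen]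
  · simp [hlen_simple_eq_one]

theorem hlen_ne_top (P : Type) [AddCommGroup P] [Module Ω P] [Module.Projective Ω P]
    (M : Type) [AddCommGroup M] [Module Ω M] (hM : IsFiniteLength Ω M) :
    hlen (Ω := Ω) P M ≠ ⊤ := by
  induction hM with
  | of_subsingleton =>
    simp [hlen]
  | of_simple_quotient hN ih =>
    rename_i M _ _ N hs
    rw [hlen_exact P N.subtype N.mkQ N.injective_subtype N.mkQ_surjective
      (LinearMap.exact_subtype_mkQ N)]
    simp [ih, hlen_simple_ne_top]

theorem isFiniteLength_of_finite [IsArtinianRing Ω] (M : Type) [AddCommGroup M] [Module Ω M]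
    [Module.Finite Ω M] : IsFiniteLength Ω M :=
  isFiniteLength_iff_isNoetherian_isArtinian.2 ⟨inferInstance, inferInstance⟩

/-- The multiplicity homomorphism on `G₀`. -/
noncomputable def gmult [IsArtinianRing Ω] (P : PMod Ω) : G0 Ω →+ ℤ :=
  QuotientAddGroup.lift _
    (FreeAbelianGroup.lift fun M : FGMod Ω => ((hlen (Ω := Ω) P.carrier M.carrier).toNat : ℤ)) (by
      rw [AddSubgroup.closure_le]
      rintro _ ⟨A, B, C, f, g, hf, hg, h, rfl⟩
      have := hlen_exact P.carrier f g hf hg h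
      simp only [SetLike.mem_coe, AddMonoidHom.mem_ker, map_sub, FreeAbelianGroup.lift_apply_of]
      rw [this, ENat.toNat_add (hlen_ne_top _ _ (isFiniteLength_of_finite _))
        (hlen_ne_top _ _ (isFiniteLength_of_finite _))]
      push_cast
      ring)

theorem gmult_cls [IsArtinianRing Ω] (P : PMod Ω) (M : Type) [AddCommGroup M] [Module Ω M]
    [Module.Finite Ω M] :
    gmult P (G0.cls Ω M) = ((hlen (Ω := Ω) P.carrier M).toNat : ℤ) := by
  refine (QuotientAddGroup.lift_mk _ _ _).trans ?_
  rw [FreeAbelianGroup.lift_apply_of]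

theorem G0.cls_exact {A B C : Type} [AddCommGroup A] [Module Ω A] [Module.Finite Ω A]
    [AddCommGroup B] [Module Ω B] [Module.Finite Ω B]
    [AddCommGroup C] [Module Ω C] [Module.Finite Ω C]
    (f : A →ₗ[Ω] B) (g : B →ₗ[Ω] C) (hf : Function.Injective f) (hg : Function.Surjective g)
    (h : Function.Exact f g) : G0.cls Ω B = G0.cls Ω A + G0.cls Ω C := by
  have : G0.cls Ω B - G0.cls Ω A - G0.cls Ω C = 0 :=
    (QuotientAddGroup.eq_zero_iff _).2 (AddSubgroup.subset_closure
      ⟨FGMod.mk A, FGMod.mk B, FGMod.mk C, f, g, hf, hg, h, rfl⟩)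
  rw [sub_sub, sub_eq_zero] at this
  exact this

theorem G0.cls_subsingleton (A : Type) [AddCommGroup A] [Module Ω A] [Module.Finite Ω A]
    [Subsingleton A] : G0.cls Ω A = 0 := by
  have := G0.cls_exact (Ω := Ω) (0 : A →ₗ[Ω] A) (0 : A →ₗ[Ω] A)
    (fun _ _ _ => Subsingleton.elim _ _) (fun x => ⟨0, Subsingleton.elim _ _⟩)
    (fun x => ⟨fun _ => ⟨0, Subsingleton.elim _ _⟩, fun _ => Subsingleton.elim _ _⟩)
  simpa using this

theorem G0.cls_congr {A B : Type} [AddCommGroup A] [Module Ω A] [Module.Finite Ω A]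
    [AddCommGroup B] [Module Ω B] [Module.Finite Ω B] (e : A ≃ₗ[Ω] B) :
    G0.cls Ω A = G0.cls Ω B := by
  have := G0.cls_exact (Ω := Ω) e.toLinearMap (0 : B →ₗ[Ω] PUnit)
    e.injective (fun x => ⟨0, Subsingleton.elim _ _⟩)
    (fun x => ⟨fun _ => e.surjective x, fun _ => Subsingleton.elim _ _⟩)
  rw [this, G0.cls_subsingleton PUnit, add_zero]

theorem G0.induction (H : AddSubgroup (G0 Ω))
    (h : ∀ M : FGMod Ω, G0.cls Ω M.carrier ∈ H) : H = ⊤ := by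
  rw [eq_top_iff]
  rintro x -
  obtain ⟨y, rfl⟩ := QuotientAddGroup.mk_surjective x
  induction y using FreeAbelianGroup.induction_on with
  | zero => exact H.zero_mem
  | of M => exact h M
  | neg M ih => exact H.neg_mem ih
  | add a b ha hb => exact H.add_mem ha hb

/-- The comparison map from the free group on simple classes. -/
noncomputable def gmap (Ω : Type) [Ring Ω] : (SimpleClasses Ω →₀ ℤ) →+ G0 Ω :=
  Finsupp.liftAddHom fun σ =>
    zmultiplesHom (G0 Ω) (G0.cls Ω (Quotient.out (s := SimpleMod.isoSetoid Ω) σ).carrier)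

theorem gmap_single (σ : SimpleClasses Ω) :
    gmap Ω (Finsupp.single σ 1) =
      G0.cls Ω (Quotient.out (s := SimpleMod.isoSetoid Ω) σ).carrier := by
  simp [gmap]

theorem out_equiv (S : Type) [AddCommGroup S] [Module Ω S] [IsSimpleModule Ω S] :
    ∃ σ : SimpleClasses Ω,
      Nonempty ((Quotient.out (s := SimpleMod.isoSetoid Ω) σ).carrier ≃ₗ[Ω] S) :=
  ⟨Quotient.mk (SimpleMod.isoSetoid Ω) (SimpleMod.mk S),
    Quotient.mk_out (s := SimpleMod.isoSetoid Ω) (SimpleMod.mk S)⟩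

theorem out_inj {σ τ : SimpleClasses Ω}
    (h : Nonempty ((Quotient.out (s := SimpleMod.isoSetoid Ω) σ).carrier ≃ₗ[Ω]
      (Quotient.out (s := SimpleMod.isoSetoid Ω) τ).carrier)) : σ = τ :=
  Quotient.out_equiv_out (s := SimpleMod.isoSetoid Ω) |>.1 h

theorem gmap_range_simple (S : Type) [AddCommGroup S] [Module Ω S] [IsSimpleModule Ω S] :
    G0.cls Ω S ∈ (gmap Ω).range := by
  obtain ⟨σ, ⟨e⟩⟩ := out_equiv (Ω := Ω) S
  exact ⟨Finsupp.single σ 1, by rw [gmap_single, G0.cls_congr e]⟩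

theorem gmap_range_finiteLength [IsArtinianRing Ω] (M : Type) [AddCommGroup M] [Module Ω M]
    (hM : IsFiniteLength Ω M) :
    ∀ [Module.Finite Ω M], G0.cls Ω M ∈ (gmap Ω).range := by
  induction hM with
  | of_subsingleton =>
    intro _
    rw [G0.cls_subsingleton]
    exact zero_mem _
  | of_simple_quotient hN ih =>
    rename_i M _ _ N hs
    intro _
    rw [G0.cls_exact N.subtype N.mkQ N.injective_subtype N.mkQ_surjective
      (LinearMap.exact_subtype_mkQ N)]
    exact add_mem ih (gmap_range_simple _)

theorem gmap_surjective [IsArtinianRing Ω] : Function.Surjective (gmap Ω) := by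
  rw [← AddMonoidHom.range_eq_top]
  exact G0.induction _ fun M => gmap_range_finiteLength _ (isFiniteLength_of_finite _)

theorem injective_of_dual {ι : Type 1} {X : Type 1} [AddCommGroup X] (φ : (ι →₀ ℤ) →+ X)
    (m : ι → X →+ ℤ) (h1 : ∀ i, m i (φ (Finsupp.single i 1)) = 1)
    (h0 : ∀ i j, i ≠ j → m i (φ (Finsupp.single j 1)) = 0) : Function.Injective φ := by
  classical
  have key : ∀ i, (m i).comp φ = Finsupp.applyAddHom i := by
    intro i
    ext j
    simp only [AddMonoidHom.comp_apply, Finsupp.singleAddHom_apply, Finsupp.applyAddHom_apply]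
    by_cases h : i = j
    · subst h
      rw [h1]; simp
    · rw [h0 i j h, Finsupp.single_apply, if_neg (Ne.symm h)]
  rw [injective_iff_map_eq_zero]
  intro x hx
  ext i
  have := DFunLike.congr_fun (key i) x
  simp only [AddMonoidHom.comp_apply, hx, map_zero, Finsupp.applyAddHom_apply] at this
  simp [← this]

/-! ### Multiplicity for `K₀` -/

/-- The intersection of the kernels of all maps to `S`. -/
def rej (P S : Type) [AddCommGroup P] [Module Ω P] [AddCommGroup S] [Module Ω S] :
    Submodule Ω P := ⨅ f : P →ₗ[Ω] S, LinearMap.ker f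

theorem mem_rej {P S : Type} [AddCommGroup P] [Module Ω P] [AddCommGroup S] [Module Ω S] {x : P} :
    x ∈ rej (Ω := Ω) P S ↔ ∀ f : P →ₗ[Ω] S, f x = 0 := by
  simp [rej]

theorem rej_length (S : Type) [AddCommGroup S] [Module Ω S] {A B C : Type}
    [AddCommGroup A] [Module Ω A]
    [AddCommGroup B] [Module Ω B] [AddCommGroup C] [Module Ω C] (e : B ≃ₗ[Ω] A × C) :
    Module.length Ω (B ⧸ rej (Ω := Ω) B S) =
      Module.length Ω (A ⧸ rej (Ω := Ω) A S) + Module.length Ω (C ⧸ rej (Ω := Ω) C S) := by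
  let q : B →ₗ[Ω] (A ⧸ rej (Ω := Ω) A S) × (C ⧸ rej (Ω := Ω) C S) :=
    (LinearMap.prodMap (Submodule.mkQ _) (Submodule.mkQ _)) ∘ₗ e.toLinearMap
  have hq : Function.Surjective q := by
    refine Function.Surjective.comp (g := LinearMap.prodMap (Submodule.mkQ _) (Submodule.mkQ _))
      ?_ e.surjective
    exact Function.Surjective.prodMap (Submodule.mkQ_surjective _) (Submodule.mkQ_surjective _)
  have hk : LinearMap.ker q = rej (Ω := Ω) B S := by
    ext x
    have : x ∈ LinearMap.ker q ↔ (e x).1 ∈ rej (Ω := Ω) A S ∧ (e x).2 ∈ rej (Ω := Ω) C S := by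
      simp [q, Prod.ext_iff]
    rw [this, mem_rej, mem_rej, mem_rej]
    constructor
    · rintro ⟨h1, h2⟩ f
      have e1 := h1 (f ∘ₗ e.symm.toLinearMap ∘ₗ LinearMap.inl Ω A C)
      have e2 := h2 (f ∘ₗ e.symm.toLinearMap ∘ₗ LinearMap.inr Ω A C)
      have hx : x = e.symm ((e x).1, 0) + e.symm (0, (e x).2) := by
        rw [← map_add]; simp
      rw [hx, map_add]
      simp only [LinearMap.comp_apply, LinearMap.inl_apply, LinearMap.inr_apply,
        LinearEquiv.coe_coe] at e1 e2
      rw [e1, e2, add_zero]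
    · intro h
      exact ⟨fun f => h (f ∘ₗ LinearMap.fst Ω A C ∘ₗ e.toLinearMap),
        fun f => h (f ∘ₗ LinearMap.snd Ω A C ∘ₗ e.toLinearMap)⟩
  rw [← Module.length_prod, ← hk]
  exact (q.quotKerEquivOfSurjective hq).length_eq

/-- The multiplicity homomorphism on `K₀`. -/
noncomputable def kmult [IsArtinianRing Ω] (S : SimpleMod Ω) : K0 Ω →+ ℤ :=
  QuotientAddGroup.lift _
    (FreeAbelianGroup.lift fun M : PMod Ω =>
      ((Module.length Ω (M.carrier ⧸ rej (Ω := Ω) M.carrier S.carrier)).toNat : ℤ)) (by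
      rw [AddSubgroup.closure_le]
      rintro _ ⟨A, B, C, ⟨e⟩, rfl⟩
      simp only [SetLike.mem_coe, AddMonoidHom.mem_ker, map_sub, FreeAbelianGroup.lift_apply_of]
      rw [rej_length S.carrier e, ENat.toNat_add Module.length_ne_top Module.length_ne_top]
      push_cast
      ring)

theorem kmult_cls [IsArtinianRing Ω] (S : SimpleMod Ω) (M : Type) [AddCommGroup M] [Module Ω M]
    [Module.Finite Ω M] [Module.Projective Ω M] :
    kmult S (K0.cls Ω M) =
      ((Module.length Ω (M ⧸ rej (Ω := Ω) M S.carrier)).toNat : ℤ) := by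
  refine (QuotientAddGroup.lift_mk _ _ _).trans ?_
  rw [FreeAbelianGroup.lift_apply_of]

theorem K0.cls_prod {A B C : Type} [AddCommGroup A] [Module Ω A] [Module.Finite Ω A]
    [Module.Projective Ω A]
    [AddCommGroup B] [Module Ω B] [Module.Finite Ω B] [Module.Projective Ω B]
    [AddCommGroup C] [Module Ω C] [Module.Finite Ω C] [Module.Projective Ω C]
    (e : B ≃ₗ[Ω] A × C) : K0.cls Ω B = K0.cls Ω A + K0.cls Ω C := by
  have : K0.cls Ω B - K0.cls Ω A - K0.cls Ω C = 0 :=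
    (QuotientAddGroup.eq_zero_iff _).2 (AddSubgroup.subset_closure
      ⟨PMod.mk A, PMod.mk B, PMod.mk C, ⟨e⟩, rfl⟩)
  rw [sub_sub, sub_eq_zero] at this
  exact this

theorem K0.cls_subsingleton (A : Type) [AddCommGroup A] [Module Ω A] [Module.Finite Ω A]
    [Module.Projective Ω A] [Subsingleton A] : K0.cls Ω A = 0 := by
  have := K0.cls_prod (Ω := Ω) (A := A) (B := A) (C := A)
    { (0 : A →ₗ[Ω] A × A) with
      invFun := fun _ => 0
      left_inv := fun _ => Subsingleton.elim _ _
      right_inv := fun _ => Subsingleton.elim _ _ }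
  simpa using this

theorem K0.induction (H : AddSubgroup (K0 Ω))
    (h : ∀ M : PMod Ω, K0.cls Ω M.carrier ∈ H) : H = ⊤ := by
  rw [eq_top_iff]
  rintro x -
  obtain ⟨y, rfl⟩ := QuotientAddGroup.mk_surjective x
  induction y using FreeAbelianGroup.induction_on with
  | zero => exact H.zero_mem
  | of M => exact h M
  | neg M ih => exact H.neg_mem ih
  | add a b ha hb => exact H.add_mem ha hb

/-- A chosen projective cover of a simple module. -/
noncomputable def cov [IsArtinianRing Ω] (σ : SimpleClasses Ω) : PMod Ω :=
  (exists_cover (Ω := Ω) (Quotient.out (s := SimpleMod.isoSetoid Ω) σ).carrier).choose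

theorem cov_spec [IsArtinianRing Ω] (σ : SimpleClasses Ω) :
    ∃ p : (cov σ).carrier →ₗ[Ω] (Quotient.out (s := SimpleMod.isoSetoid Ω) σ).carrier,
      IsCover p :=
  (exists_cover (Ω := Ω) (Quotient.out (s := SimpleMod.isoSetoid Ω) σ).carrier).choose_spec

theorem IsCover.ne_zero {P S : Type} [AddCommGroup P] [Module Ω P]
    [AddCommGroup S] [Module Ω S] [IsSimpleModule Ω S]
    {p : P →ₗ[Ω] S} (hp : IsCover p) : p ≠ 0 := by
  rintro rfl
  have := IsSimpleModule.nontrivial Ω S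
  obtain ⟨s, hs⟩ := exists_ne (0 : S)
  obtain ⟨x, hx⟩ := hp.1 s
  exact hs hx.symm

theorem cov_hom_eq_zero [IsArtinianRing Ω] {σ τ : SimpleClasses Ω} (h : σ ≠ τ)
    (g : (cov σ).carrier →ₗ[Ω] (Quotient.out (s := SimpleMod.isoSetoid Ω) τ).carrier) :
    g = 0 := by
  by_contra hg
  obtain ⟨p, hp⟩ := cov_spec σ
  exact h (out_inj (hp.equiv_of_ne_zero hg).2)

theorem gmap_injective [IsArtinianRing Ω] : Function.Injective (gmap Ω) := by
  refine injective_of_dual _ (fun σ => gmult (cov σ)) ?_ ?_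
  · intro σ
    obtain ⟨p, hp⟩ := cov_spec σ
    have : Nontrivial ((cov σ).carrier →ₗ[Ω]
      (Quotient.out (s := SimpleMod.isoSetoid Ω) σ).carrier) := ⟨p, 0, hp.ne_zero⟩
    rw [gmap_single, gmult_cls, hlen_simple_eq_one]
    simp
  · intro σ τ h
    have : Subsingleton ((cov σ).carrier →ₗ[Ω]
      (Quotient.out (s := SimpleMod.isoSetoid Ω) τ).carrier) :=
      ⟨fun a b => by rw [cov_hom_eq_zero h a, cov_hom_eq_zero h b]⟩
    rw [gmap_single, gmult_cls]
    simp [hlen]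

/-- The comparison map from the free group on simple classes. -/
noncomputable def kmap (Ω : Type) [Ring Ω] [IsArtinianRing Ω] : (SimpleClasses Ω →₀ ℤ) →+ K0 Ω :=
  Finsupp.liftAddHom fun σ => zmultiplesHom (K0 Ω) (K0.cls Ω (cov σ).carrier)

theorem kmap_single [IsArtinianRing Ω] (σ : SimpleClasses Ω) :
    kmap Ω (Finsupp.single σ 1) = K0.cls Ω (cov σ).carrier := by
  simp [kmap]

theorem kmap_injective [IsArtinianRing Ω] : Function.Injective (kmap Ω) := by
  refine injective_of_dual _
    (fun σ => kmult (Quotient.out (s := SimpleMod.isoSetoid Ω) σ)) ?_ ?_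
  · intro σ
    obtain ⟨p, hp⟩ := cov_spec σ
    have hr : rej (Ω := Ω) (cov σ).carrier (Quotient.out (s := SimpleMod.isoSetoid Ω) σ).carrier
        = LinearMap.ker p := by
      refine le_antisymm (iInf_le _ p) (le_iInf fun g => ?_)
      by_cases hg : g = 0
      · simp [hg]
      · rw [(hp.equiv_of_ne_zero hg).1]
    rw [kmap_single, kmult_cls, hr, (p.quotKerEquivOfSurjective hp.1).length_eq,
      Module.length_eq_one]
    simp
  · intro σ τ h
    have hr : rej (Ω := Ω) (cov τ).carrier (Quotient.out (s := SimpleMod.isoSetoid Ω) σ).carrier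
        = ⊤ := by
      rw [eq_top_iff]
      refine le_iInf fun g => ?_
      rw [cov_hom_eq_zero h.symm g]
      simp
    rw [kmap_single, kmult_cls, hr, Module.length_eq_zero]
    simp

theorem kmap_range [IsArtinianRing Ω] (n : ℕ) : ∀ P : PMod Ω,
    (Module.length Ω P.carrier).toNat = n → K0.cls Ω P.carrier ∈ (kmap Ω).range := by
  induction n using Nat.strong_induction_on with
  | _ n ih =>
    intro P hP
    rcases subsingleton_or_nontrivial P.carrier with hs | hs
    · rw [K0.cls_subsingleton]
      exact zero_mem _
    obtain ⟨m, hm, -⟩ := (eq_top_or_exists_le_coatom (⊥ : Submodule Ω P.carrier)).resolve_left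
      bot_ne_top
    have hsimp : IsSimpleModule Ω (P.carrier ⧸ m) := isSimpleModule_iff_isCoatom.2 hm
    obtain ⟨σ, ⟨e⟩⟩ := out_equiv (Ω := Ω) (P.carrier ⧸ m)
    obtain ⟨p, hp⟩ := cov_spec σ
    let q : P.carrier →ₗ[Ω] (Quotient.out (s := SimpleMod.isoSetoid Ω) σ).carrier :=
      e.symm.toLinearMap ∘ₗ m.mkQ
    have hq : Function.Surjective q := e.symm.surjective.comp m.mkQ_surjective
    obtain ⟨f, hf⟩ := Module.projective_lifting_property p q hp.1
    have hfs : Function.Surjective f := by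
      rw [← LinearMap.range_eq_top]
      by_contra hne
      have hle := hp.2 _ hne
      have := IsSimpleModule.nontrivial Ω (Quotient.out (s := SimpleMod.isoSetoid Ω) σ).carrier
      obtain ⟨s, hs⟩ := exists_ne
        (0 : (Quotient.out (s := SimpleMod.isoSetoid Ω) σ).carrier)
      obtain ⟨x, rfl⟩ := hq s
      apply hs
      rw [← hf]
      exact hle ⟨x, rfl⟩
    obtain ⟨g, hg⟩ := Module.projective_lifting_property f LinearMap.id hfs
    have hc : IsCompl (LinearMap.range g) (LinearMap.ker f) := by
      have hfg : ∀ y, f (g y) = y := fun y => LinearMap.congr_fun hg y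
      constructor
      · rw [Submodule.disjoint_def]
        rintro _ ⟨y, rfl⟩ hy
        have : y = 0 := by rw [← hfg y]; exact hy
        rw [this, map_zero]
      · rw [codisjoint_iff, eq_top_iff]
        intro x _
        refine Submodule.mem_sup.2 ⟨g (f x), ⟨f x, rfl⟩, x - g (f x), ?_, by abel⟩
        rw [LinearMap.mem_ker, map_sub, hfg, sub_self]
    have hproj : Module.Projective Ω (LinearMap.ker f) := projective_of_isCompl hc
    have hgi : Function.Injective g := by
      intro a b hab
      have := congrArg f hab
      have h1 := LinearMap.congr_fun hg a
      have h2 := LinearMap.congr_fun hg b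
      simp only [LinearMap.comp_apply, LinearMap.id_apply] at h1 h2
      rw [← h1, ← h2, this]
    let E : P.carrier ≃ₗ[Ω] LinearMap.ker f × (cov σ).carrier :=
      (Submodule.prodEquivOfIsCompl _ _ hc.symm).symm ≪≫ₗ
        LinearEquiv.prodCongr (LinearEquiv.refl _ _) (LinearEquiv.ofInjective g hgi).symm
    rw [K0.cls_prod E]
    have hker : LinearMap.ker f ≠ ⊤ := by
      intro h
      have h0 := LinearMap.ker_eq_top.1 h
      apply hp.ne_zero
      ext x
      obtain ⟨y, rfl⟩ := hfs x
      rw [h0]; simp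
    refine add_mem (ih _ ?_ (PMod.mk (LinearMap.ker f)) rfl) ⟨Finsupp.single σ 1, kmap_single σ⟩
    rw [← hP]
    exact toNat_lt_of_lt (Submodule.length_lt hker) Module.length_ne_top

theorem kmap_surjective [IsArtinianRing Ω] : Function.Surjective (kmap Ω) := by
  rw [← AddMonoidHom.range_eq_top]
  exact K0.induction _ fun M => kmap_range _ M rfl

end Helpers

/-- **Lemma on ranks of Grothendieck groups** (Lemma 2.8 of the paper).
Let `Ω` be a left artinian ring and let `s` be the number of isomorphism classes of
simple left `Ω`-modules.  Then `K₀(Ω)` and `G₀(Ω)` are free `ℤ`-modules of rank `s`. -/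
theorem rank_K0_G0_of_artinian (Ω : Type) [Ring Ω] [IsArtinianRing Ω] :
    Nonempty (G0 Ω ≃+ (SimpleClasses Ω →₀ ℤ)) ∧ Nonempty (K0 Ω ≃+ (SimpleClasses Ω →₀ ℤ)) := by
  exact ⟨⟨(AddEquiv.ofBijective (gmap Ω) ⟨gmap_injective, gmap_surjective⟩).symm⟩,
    ⟨(AddEquiv.ofBijective (kmap Ω) ⟨kmap_injective, kmap_surjective⟩).symm⟩⟩
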